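/- arXiv:1903.01940 — 8 statements merged into one kernel-verified Lean document; each statement's English description precedes it below -/
import Mathlib

section
/- Let w = (w₁,w₂,w₃,w₄) and w' = (w₁',w₂',w₃',w₄') be unit vectors in ℝ⁴. There exist 2×2 real orthogonal matrices U and V such that the Kronecker product U ⊗ V maps w to w' if and only if |w₁w₄ − w₂w₃| = |w₁'w₄' − w₂'w₃'|. (This classifies the orbits of two-qubit states with real amplitudes under real local gates: two states are connected by real local gates exactly when the absolute determinants of their amplitude matrices agree.) -/
/-!
Writing `W` for the amplitude matrix of `w`, the gate `U ⊗ V` acts by `W ↦ U W Vᵀ`. The orbits of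
this action are classified by the singular values of `W`, i.e. by the characteristic polynomial of
the Gram matrix `Wᵀ W`: matrices with the same such polynomial have orthogonally conjugate Gram
matrices by the spectral theorem, and matrices with the same Gram matrix differ by an isometry on
the left. For a `2 × 2` matrix that polynomial is `X² - ‖W‖² X + (det W)²`, with `‖W‖` the Frobenius
norm of `W`, which is the norm of `w`.
-/

open Matrix Real

/-- Kronecker product of two `2 × 2` real matrices, as a `4 × 4` real matrix
acting on amplitude vectors `(w₁,w₂,w₃,w₄)` of two-qubit states. -/
noncomputable def kron (A B : Matrix (Fin 2) (Fin 2) ℝ) : Matrix (Fin 4) (Fin 4) ℝ :=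
  Matrix.of fun i j =>
    A ⟨i.val / 2, by omega⟩ ⟨j.val / 2, by omega⟩ *
    B ⟨i.val % 2, by omega⟩ ⟨j.val % 2, by omega⟩

section UnitaryEquivalence

variable {𝕜 : Type*} [RCLike 𝕜]

lemma exists_linearIsometry_apply_eq_of_norm_eq {E F : Type*} [AddCommGroup E] [Module 𝕜 E]
    [NormedAddCommGroup F] [InnerProductSpace 𝕜 F] [FiniteDimensional 𝕜 F] {f g : E →ₗ[𝕜] F}
    (h : ∀ x, ‖f x‖ = ‖g x‖) : ∃ u : F →ₗᵢ[𝕜] F, ∀ x, u (f x) = g x := by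
  have ker_le : f.ker ≤ g.ker := fun x hx ↦ by
    rw [LinearMap.mem_ker, ← norm_eq_zero, ← h, LinearMap.mem_ker.mp hx, norm_zero]
  let u₀ : f.range →ₗ[𝕜] F := f.ker.liftQ g ker_le ∘ₗ f.quotKerEquivRange.symm
  have u₀_apply (x : E) : u₀ (f.rangeRestrict x) = g x := by
    have : f.quotKerEquivRange.symm (f.rangeRestrict x) = f.ker.mkQ x :=
      (LinearEquiv.symm_apply_eq _).mpr rfl
    simp [u₀, this]
  have norm_u₀ (y : f.range) : ‖u₀ y‖ = ‖y‖ := by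
    obtain ⟨x, rfl⟩ := f.surjective_rangeRestrict y
    exact (congrArg norm (u₀_apply x)).trans (h x).symm
  exact ⟨LinearIsometry.extend ⟨u₀, norm_u₀⟩, fun x ↦
    (LinearIsometry.extend_apply ⟨u₀, norm_u₀⟩ (f.rangeRestrict x)).trans (u₀_apply x)⟩

variable {m n : Type*} [Fintype m] [Fintype n] [DecidableEq n]

lemma norm_sq_toEuclideanLin_apply (A : Matrix m n 𝕜) (x : EuclideanSpace 𝕜 n) :
    (‖toEuclideanLin A x‖ ^ 2 : 𝕜) = star x.ofLp ⬝ᵥ (Aᴴ * A) *ᵥ x.ofLp := by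
  rw [← inner_self_eq_norm_sq_to_K (𝕜 := 𝕜), EuclideanSpace.inner_eq_star_dotProduct,
    ofLp_toLpLin, toLin'_apply, dotProduct_comm, star_mulVec, ← dotProduct_mulVec, mulVec_mulVec]

lemma mem_unitaryGroup_iff_norm_toEuclideanCLM_apply {U : Matrix n n 𝕜} :
    U ∈ unitaryGroup n 𝕜 ↔ ∀ x, ‖toEuclideanCLM (𝕜 := 𝕜) U x‖ = ‖x‖ := by
  rw [mem_unitaryGroup_iff', ← EmbeddingLike.apply_eq_iff_eq (toEuclideanCLM (n := n) (𝕜 := 𝕜)),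
    map_mul, map_star, map_one]
  exact (ContinuousLinearMap.norm_map_iff_adjoint_comp_self _).symm

variable [DecidableEq m]

lemma exists_mem_unitaryGroup_mul_eq {n : Type*} [Finite n] {A B : Matrix m n 𝕜}
    (h : Aᴴ * A = Bᴴ * B) : ∃ U ∈ unitaryGroup m 𝕜, U * A = B := by
  classical
  have := Fintype.ofFinite n
  have norm_eq (x : EuclideanSpace 𝕜 n) : ‖toEuclideanLin A x‖ = ‖toEuclideanLin B x‖ := by
    rw [← sq_eq_sq₀ (norm_nonneg _) (norm_nonneg _)]
    exact_mod_cast (norm_sq_toEuclideanLin_apply A x).trans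
      (h ▸ (norm_sq_toEuclideanLin_apply B x).symm)
  obtain ⟨u, hu⟩ := exists_linearIsometry_apply_eq_of_norm_eq norm_eq
  obtain ⟨U, hU⟩ := EquivLike.surjective (toEuclideanCLM (n := m) (𝕜 := 𝕜))
    u.toContinuousLinearMap
  refine ⟨U, mem_unitaryGroup_iff_norm_toEuclideanCLM_apply.mpr fun x ↦ ?_, ?_⟩
  · rw [hU]
    exact u.norm_map x
  · refine ext_iff_mulVec.mpr fun v ↦ WithLp.toLp_injective 2 ?_
    rw [← mulVec_mulVec, ← toEuclideanCLM_toLp, hU]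
    exact hu (WithLp.toLp 2 v)

lemma exists_mem_unitaryGroup_conj_eq {A B : Matrix n n 𝕜} (hA : A.IsHermitian)
    (hB : B.IsHermitian) (h : A.charpoly = B.charpoly) :
    ∃ V ∈ unitaryGroup n 𝕜, V * A * star V = B := by
  have eigenvalues_eq : hA.eigenvalues = hB.eigenvalues :=
    (hA.eigenvalues_eq_eigenvalues_iff hB).mpr h
  let V : unitaryGroup n 𝕜 := hB.eigenvectorUnitary * star hA.eigenvectorUnitary
  refine ⟨V, V.2, ?_⟩
  rw [← Unitary.conjStarAlgAut_apply (S := 𝕜), Unitary.conjStarAlgAut_mul_apply,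
    hA.conjStarAlgAut_star_eigenvectorUnitary, eigenvalues_eq, ← hB.spectral_theorem]

theorem exists_unitary_mul_mul_star_eq_iff_charpoly_eq (A B : Matrix m n 𝕜) :
    (∃ U ∈ unitaryGroup m 𝕜, ∃ V ∈ unitaryGroup n 𝕜, U * A * star V = B) ↔
      (Aᴴ * A).charpoly = (Bᴴ * B).charpoly := by
  have gram_mul_star (V : Matrix n n 𝕜) :
      (A * star V)ᴴ * (A * star V) = V * (Aᴴ * A) * star V := by
    simp only [star_eq_conjTranspose, conjTranspose_mul, conjTranspose_conjTranspose,
      Matrix.mul_assoc]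
  constructor
  · rintro ⟨U, hU, V, hV, rfl⟩
    have gram_eq : (U * A * star V)ᴴ * (U * A * star V) = V * (Aᴴ * A) * star V := by
      rw [← gram_mul_star, Matrix.mul_assoc U, conjTranspose_mul, Matrix.mul_assoc,
        ← Matrix.mul_assoc Uᴴ, ← star_eq_conjTranspose U, mem_unitaryGroup_iff'.mp hU,
        Matrix.one_mul]
    rw [gram_eq, charpoly_mul_comm, ← Matrix.mul_assoc, mem_unitaryGroup_iff'.mp hV,
      Matrix.one_mul]
  · intro h
    obtain ⟨V, hV, conj_eq⟩ := exists_mem_unitaryGroup_conj_eq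
      (isHermitian_conjTranspose_mul_self A) (isHermitian_conjTranspose_mul_self B) h
    obtain ⟨U, hU, mul_eq⟩ := exists_mem_unitaryGroup_mul_eq ((gram_mul_star V).trans conj_eq)
    exact ⟨U, hU, V, hV, (Matrix.mul_assoc _ _ _).trans mul_eq⟩

end UnitaryEquivalence

lemma charpoly_eq_charpoly_iff_fin_two {R : Type*} [CommRing R] [Nontrivial R]
    (A B : Matrix (Fin 2) (Fin 2) R) :
    A.charpoly = B.charpoly ↔ A.trace = B.trace ∧ A.det = B.det := by
  refine ⟨fun h ↦ ⟨?_, ?_⟩, fun ⟨htr, hdet⟩ ↦ ?_⟩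
  · rw [trace_eq_neg_charpoly_coeff, h, ← trace_eq_neg_charpoly_coeff]
  · rw [det_eq_sign_charpoly_coeff, h, ← det_eq_sign_charpoly_coeff]
  · rw [charpoly_fin_two, charpoly_fin_two, htr, hdet]

theorem exists_orthogonal_mul_mul_transpose_eq_iff (A B : Matrix (Fin 2) (Fin 2) ℝ) :
    (∃ U V : Matrix (Fin 2) (Fin 2) ℝ, Uᵀ * U = 1 ∧ Vᵀ * V = 1 ∧ U * A * Vᵀ = B) ↔
      (Aᵀ * A).trace = (Bᵀ * B).trace ∧ |A.det| = |B.det| := by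
  have h := exists_unitary_mul_mul_star_eq_iff_charpoly_eq A B
  simp only [mem_unitaryGroup_iff', star_eq_conjTranspose, conjTranspose_eq_transpose_of_trivial,
    charpoly_eq_charpoly_iff_fin_two, det_mul, det_transpose, ← sq, sq_eq_sq_iff_abs_eq_abs] at h
  rw [← h]
  simp only [exists_and_left]

/-- The matrix `W` of amplitudes of the two-qubit state `w`: the row is the value of the first
qubit and the column that of the second. On these matrices the local gate `U ⊗ V` acts by
`W ↦ U W Vᵀ`. -/
def amplitudeMatrix (w : Fin 4 → ℝ) : Matrix (Fin 2) (Fin 2) ℝ :=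
  !![w 0, w 1; w 2, w 3]

lemma vec_transpose_amplitudeMatrix (w : Fin 4 → ℝ) :
    vec (amplitudeMatrix w)ᵀ = w ∘ (finProdFinEquiv : Fin 2 × Fin 2 ≃ Fin 4) := by
  ext ⟨i, j⟩
  fin_cases i <;> fin_cases j <;> rfl

lemma amplitudeMatrix_injective : Function.Injective amplitudeMatrix := by
  intro w w' h
  apply (finProdFinEquiv : Fin 2 × Fin 2 ≃ Fin 4).surjective.injective_comp_right
  change w ∘ _ = w' ∘ _
  rw [← vec_transpose_amplitudeMatrix, h, vec_transpose_amplitudeMatrix]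

open scoped Kronecker in
lemma kron_eq_submatrix_kronecker (U V : Matrix (Fin 2) (Fin 2) ℝ) :
    kron U V = (U ⊗ₖ V).submatrix finProdFinEquiv.symm finProdFinEquiv.symm :=
  rfl

open scoped Kronecker in
lemma amplitudeMatrix_kron_mulVec (U V : Matrix (Fin 2) (Fin 2) ℝ) (w : Fin 4 → ℝ) :
    amplitudeMatrix (kron U V *ᵥ w) = U * amplitudeMatrix w * Vᵀ := by
  apply transpose_injective
  apply vec_inj.mp
  calc vec (amplitudeMatrix (kron U V *ᵥ w))ᵀ
    _ = (kron U V *ᵥ w) ∘ finProdFinEquiv := vec_transpose_amplitudeMatrix _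
    _ = (U ⊗ₖ V) *ᵥ (w ∘ finProdFinEquiv) := by
      rw [kron_eq_submatrix_kronecker, submatrix_mulVec_equiv, Equiv.symm_symm,
        Function.comp_assoc, Equiv.symm_comp_self, Function.comp_id]
    _ = vec (V * (amplitudeMatrix w)ᵀ * Uᵀ) := by
      rw [← vec_transpose_amplitudeMatrix, kronecker_mulVec_vec]
    _ = vec (U * amplitudeMatrix w * Vᵀ)ᵀ := by
      rw [transpose_mul, transpose_mul, transpose_transpose, Matrix.mul_assoc]

lemma det_amplitudeMatrix (w : Fin 4 → ℝ) :
    (amplitudeMatrix w).det = w 0 * w 3 - w 1 * w 2 :=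
  det_fin_two_of ..

lemma trace_transpose_mul_amplitudeMatrix (w : Fin 4 → ℝ) :
    ((amplitudeMatrix w)ᵀ * amplitudeMatrix w).trace = w 0 ^ 2 + w 1 ^ 2 + w 2 ^ 2 + w 3 ^ 2 := by
  simp only [amplitudeMatrix, trace_fin_two, mul_apply, transpose_apply, Fin.sum_univ_two, of_apply,
    cons_val_zero, cons_val_one]
  ring

theorem stmt_0_general (w w' : Fin 4 → ℝ) :
    (∃ U V : Matrix (Fin 2) (Fin 2) ℝ, Uᵀ * U = 1 ∧ Vᵀ * V = 1 ∧ (kron U V).mulVec w = w') ↔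
      w 0 ^ 2 + w 1 ^ 2 + w 2 ^ 2 + w 3 ^ 2 = w' 0 ^ 2 + w' 1 ^ 2 + w' 2 ^ 2 + w' 3 ^ 2 ∧
        |w 0 * w 3 - w 1 * w 2| = |w' 0 * w' 3 - w' 1 * w' 2| := by
  simp_rw [← amplitudeMatrix_injective.eq_iff, amplitudeMatrix_kron_mulVec,
    exists_orthogonal_mul_mul_transpose_eq_iff, trace_transpose_mul_amplitudeMatrix,
    det_amplitudeMatrix]

theorem stmt_0 (w w' : Fin 4 → ℝ)
    (hw : w 0 ^ 2 + w 1 ^ 2 + w 2 ^ 2 + w 3 ^ 2 = 1)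
    (hw' : w' 0 ^ 2 + w' 1 ^ 2 + w' 2 ^ 2 + w' 3 ^ 2 = 1) :
    (∃ U V : Matrix (Fin 2) (Fin 2) ℝ, Uᵀ * U = 1 ∧ Vᵀ * V = 1 ∧
        (kron U V).mulVec w = w') ↔
      |w 0 * w 3 - w 1 * w 2| = |w' 0 * w' 3 - w' 1 * w' 2| :=
  (stmt_0_general w w').trans (and_iff_right (hw.trans hw'.symm))
end

section
/- Let w = (w₁,w₂,w₃,w₄) and w' = (w₁',w₂',w₃',w₄') be unit vectors in ℝ⁴ satisfying (w₁ − w₄)² + (w₂ + w₃)² = (w₁' − w₄')² + (w₂' + w₃')². Then there exist real numbers s and t such that (R_y(s) ⊗ R_y(t)) w = w'. (Rotation gates alone act transitively on each torus Σ_d(v₃,v₄).) -/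
/-!
The combinations `(w₁ - w₄) + (w₂ + w₃) i` and `(w₁ + w₄) + (w₃ - w₂) i` turn `ℝ⁴` into `ℂ²`, and
there `R_y(s) ⊗ R_y(t)` acts diagonally, through the phases `exp (i (s + t) / 2)` and
`exp (i (s - t) / 2)`. These two phases can be prescribed independently, so two states are related
as soon as both complex coordinates agree in modulus. The squared moduli add up to twice the squared
norm of the state, so that it is enough to compare the norms and one of the two moduli.
-/

open Matrix Real

/-- The single-qubit rotation gate `R_y(θ)`. -/
noncomputable def Ry (θ : ℝ) : Matrix (Fin 2) (Fin 2) ℝ :=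
  !![Real.cos (θ / 2), -Real.sin (θ / 2); Real.sin (θ / 2), Real.cos (θ / 2)]

theorem exists_exp_mul_I_mul_eq {z z' : ℂ} (h : ‖z‖ = ‖z'‖) :
    ∃ θ : ℝ, Complex.exp (θ * Complex.I) * z = z' := by
  refine ⟨z'.arg - z.arg, ?_⟩
  calc Complex.exp ((z'.arg - z.arg : ℝ) * Complex.I) * z
      = Complex.exp ((z'.arg - z.arg : ℝ) * Complex.I) *
          (‖z‖ * Complex.exp (z.arg * Complex.I)) := by
        rw [Complex.norm_mul_exp_arg_mul_I]
    _ = ‖z‖ * Complex.exp (z'.arg * Complex.I) := by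
        rw [mul_left_comm, ← Complex.exp_add, Complex.ofReal_sub, sub_mul, sub_add_cancel]
    _ = z' := by rw [h, Complex.norm_mul_exp_arg_mul_I]

theorem kron_mulVec (A B : Matrix (Fin 2) (Fin 2) ℝ) (w : Fin 4 → ℝ) :
    kron A B *ᵥ w =
      ![A 0 0 * B 0 0 * w 0 + A 0 0 * B 0 1 * w 1 + A 0 1 * B 0 0 * w 2 + A 0 1 * B 0 1 * w 3,
        A 0 0 * B 1 0 * w 0 + A 0 0 * B 1 1 * w 1 + A 0 1 * B 1 0 * w 2 + A 0 1 * B 1 1 * w 3,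
        A 1 0 * B 0 0 * w 0 + A 1 0 * B 0 1 * w 1 + A 1 1 * B 0 0 * w 2 + A 1 1 * B 0 1 * w 3,
        A 1 0 * B 1 0 * w 0 + A 1 0 * B 1 1 * w 1 + A 1 1 * B 1 0 * w 2 + A 1 1 * B 1 1 * w 3] := by
  ext i
  rw [mulVec, dotProduct, Fin.sum_univ_four]
  fin_cases i <;> rfl

/-- The complex coordinate of a two-qubit state whose phase advances by the half-sum of the angles
of two `R_y` gates. Its real and imaginary parts are `√2` times the amplitudes on the Bell states
`(|00⟩ - |11⟩) / √2` and `(|01⟩ + |10⟩) / √2`. -/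
def sumPhaseCoord (w : Fin 4 → ℝ) : ℂ := ⟨w 0 - w 3, w 1 + w 2⟩

/-- The complex coordinate of a two-qubit state whose phase advances by the half-difference of the
angles of two `R_y` gates. Its real and imaginary parts are `√2` times the amplitudes on the Bell
states `(|00⟩ + |11⟩) / √2` and `(|10⟩ - |01⟩) / √2`. -/
def diffPhaseCoord (w : Fin 4 → ℝ) : ℂ := ⟨w 0 + w 3, w 2 - w 1⟩

theorem eq_of_sumPhaseCoord_eq_of_diffPhaseCoord_eq {w w' : Fin 4 → ℝ}
    (hsum : sumPhaseCoord w = sumPhaseCoord w') (hdiff : diffPhaseCoord w = diffPhaseCoord w') :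
    w = w' := by
  obtain ⟨hsum_re, hsum_im⟩ := Complex.mk.inj hsum
  obtain ⟨hdiff_re, hdiff_im⟩ := Complex.mk.inj hdiff
  ext i
  fin_cases i <;> grind

theorem norm_sumPhaseCoord_sq (w : Fin 4 → ℝ) :
    ‖sumPhaseCoord w‖ ^ 2 = (w 0 - w 3) ^ 2 + (w 1 + w 2) ^ 2 := by
  rw [Complex.sq_norm, sumPhaseCoord, Complex.normSq_mk]
  ring

theorem norm_sumPhaseCoord_sq_add_norm_diffPhaseCoord_sq (w : Fin 4 → ℝ) :
    ‖sumPhaseCoord w‖ ^ 2 + ‖diffPhaseCoord w‖ ^ 2 = 2 * ∑ i, w i ^ 2 := by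
  rw [norm_sumPhaseCoord_sq, Complex.sq_norm, diffPhaseCoord, Complex.normSq_mk,
    Fin.sum_univ_four]
  ring

theorem sumPhaseCoord_kron_Ry_mulVec (s t : ℝ) (w : Fin 4 → ℝ) :
    sumPhaseCoord (kron (Ry s) (Ry t) *ᵥ w) =
      Complex.exp (((s + t) / 2 : ℝ) * Complex.I) * sumPhaseCoord w := by
  rw [kron_mulVec, add_div]
  apply Complex.ext <;>
    simp only [sumPhaseCoord, Ry, Complex.mul_re, Complex.mul_im, Complex.exp_ofReal_mul_I_re,
      Complex.exp_ofReal_mul_I_im, cos_add, sin_add, of_apply, cons_val] <;>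
    ring

theorem diffPhaseCoord_kron_Ry_mulVec (s t : ℝ) (w : Fin 4 → ℝ) :
    diffPhaseCoord (kron (Ry s) (Ry t) *ᵥ w) =
      Complex.exp (((s - t) / 2 : ℝ) * Complex.I) * diffPhaseCoord w := by
  rw [kron_mulVec, sub_div]
  apply Complex.ext <;>
    simp only [diffPhaseCoord, Ry, Complex.mul_re, Complex.mul_im, Complex.exp_ofReal_mul_I_re,
      Complex.exp_ofReal_mul_I_im, cos_sub, sin_sub, of_apply, cons_val] <;>
    ring

theorem exists_kron_Ry_mulVec_eq_of_norm_eq {w w' : Fin 4 → ℝ}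
    (hsum : ‖sumPhaseCoord w‖ = ‖sumPhaseCoord w'‖)
    (hdiff : ‖diffPhaseCoord w‖ = ‖diffPhaseCoord w'‖) :
    ∃ s t : ℝ, kron (Ry s) (Ry t) *ᵥ w = w' := by
  obtain ⟨α, hα⟩ := exists_exp_mul_I_mul_eq hsum
  obtain ⟨β, hβ⟩ := exists_exp_mul_I_mul_eq hdiff
  have half_sum : (α + β + (α - β)) / 2 = α := by ring
  have half_diff : (α + β - (α - β)) / 2 = β := by ring
  refine ⟨α + β, α - β, eq_of_sumPhaseCoord_eq_of_diffPhaseCoord_eq ?_ ?_⟩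
  · rw [sumPhaseCoord_kron_Ry_mulVec, half_sum, hα]
  · rw [diffPhaseCoord_kron_Ry_mulVec, half_diff, hβ]

theorem stmt_1_general (w w' : Fin 4 → ℝ) (hnorm : ∑ i, w i ^ 2 = ∑ i, w' i ^ 2)
    (h : (w 0 - w 3) ^ 2 + (w 1 + w 2) ^ 2
        = (w' 0 - w' 3) ^ 2 + (w' 1 + w' 2) ^ 2) :
    ∃ s t : ℝ, (kron (Ry s) (Ry t)).mulVec w = w' := by
  have hsum : ‖sumPhaseCoord w‖ ^ 2 = ‖sumPhaseCoord w'‖ ^ 2 := by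
    simpa only [norm_sumPhaseCoord_sq] using h
  have hdiff : ‖diffPhaseCoord w‖ ^ 2 = ‖diffPhaseCoord w'‖ ^ 2 := by
    linarith [norm_sumPhaseCoord_sq_add_norm_diffPhaseCoord_sq w,
      norm_sumPhaseCoord_sq_add_norm_diffPhaseCoord_sq w']
  exact exists_kron_Ry_mulVec_eq_of_norm_eq
    ((sq_eq_sq₀ (norm_nonneg _) (norm_nonneg _)).1 hsum)
    ((sq_eq_sq₀ (norm_nonneg _) (norm_nonneg _)).1 hdiff)

theorem stmt_1 (w w' : Fin 4 → ℝ)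
    (hw : w 0 ^ 2 + w 1 ^ 2 + w 2 ^ 2 + w 3 ^ 2 = 1)
    (hw' : w' 0 ^ 2 + w' 1 ^ 2 + w' 2 ^ 2 + w' 3 ^ 2 = 1)
    (h : (w 0 - w 3) ^ 2 + (w 1 + w 2) ^ 2
        = (w' 0 - w' 3) ^ 2 + (w' 1 + w' 2) ^ 2) :
    ∃ s t : ℝ, (kron (Ry s) (Ry t)).mulVec w = w' :=
  stmt_1_general w w' (by rw [Fin.sum_univ_four, Fin.sum_univ_four, hw, hw']) h
end

section
/- Let w = (w₁,w₂,w₃,w₄) be a unit vector in ℝ⁴. There exist 2×2 real orthogonal matrices U and V with (U ⊗ V) v₃ = w if and only if there exists θ ∈ ℝ such that w = cos θ · v₃ + sin θ · v₄ or w = cos θ · v₁ + sin θ · v₂. (The orbit of a Bell state under real local gates is exactly the union of the two circles E(v₃,v₄) and E(v₁,v₂).) -/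
open Matrix Real

/-- Bell basis vector `v₁ = (|00⟩ - |11⟩)/√2`. -/
noncomputable def v1 : Fin 4 → ℝ := ![1 / Real.sqrt 2, 0, 0, -(1 / Real.sqrt 2)]

/-- Bell basis vector `v₂ = (|01⟩ + |10⟩)/√2`. -/
noncomputable def v2 : Fin 4 → ℝ := ![0, 1 / Real.sqrt 2, 1 / Real.sqrt 2, 0]

/-- Bell basis vector `v₃ = (|00⟩ + |11⟩)/√2`. -/
noncomputable def v3 : Fin 4 → ℝ := ![1 / Real.sqrt 2, 0, 0, 1 / Real.sqrt 2]

/-- Bell basis vector `v₄ = (|01⟩ - |10⟩)/√2`. -/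
noncomputable def v4 : Fin 4 → ℝ := ![0, 1 / Real.sqrt 2, -(1 / Real.sqrt 2), 0]

/-!
Read an amplitude vector as the `2 × 2` matrix whose rows are `(w₁, w₂)` and `(w₃, w₄)`. Then
`U ⊗ V` acts by `M ↦ U M Vᵀ`, and `v₃` becomes `(1/√2) I`, so its orbit is `(1/√2) O(2)`.
The two circles are the two components of `O(2)`: rotations have matrices `[a, b; -b, a]`, the
combinations of `v₃` and `v₄`, and reflections `[a, b; b, -a]`, the combinations of `v₁` and `v₂`.
-/

open scoped Kronecker

section OrthogonalGroup

variable {R : Type*} [CommRing R]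

theorem of_mem_orthogonalGroup_and_det_eq_neg_one_iff {a b c d : R} :
    !![a, b; c, d] ∈ orthogonalGroup (Fin 2) R ∧ !![a, b; c, d].det = -1 ↔
      a = -d ∧ b = c ∧ a ^ 2 + b ^ 2 = 1 := by
  -- Multiplication by the reflection `F` exchanges the two components of the orthogonal group.
  let F : Matrix (Fin 2) (Fin 2) R := !![1, 0; 0, -1]
  have hFF : F * F = 1 := by simp [F, one_fin_two]
  have hF : F ∈ orthogonalGroup (Fin 2) R := by
    have hFt : Fᵀ = F := by ext i j; fin_cases i <;> fin_cases j <;> rfl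
    rw [mem_orthogonalGroup_iff, hFt, hFF]
  have hdetF : F.det = -1 := by simp [F]
  have mem_iff (M : Matrix (Fin 2) (Fin 2) R) :
      M ∈ orthogonalGroup (Fin 2) R ↔ F * M ∈ orthogonalGroup (Fin 2) R := by
    refine ⟨mul_mem hF, fun h ↦ ?_⟩
    simpa only [← Matrix.mul_assoc, hFF, Matrix.one_mul] using mul_mem hF h
  calc
    _ ↔ F * !![a, b; c, d] ∈ specialOrthogonalGroup (Fin 2) R := by
      rw [mem_specialOrthogonalGroup_iff, ← mem_iff, det_mul, hdetF, neg_one_mul, neg_eq_iff_eq_neg]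
    _ ↔ a = -d ∧ b = c ∧ a ^ 2 + b ^ 2 = 1 := by
      simp [F]

theorem mem_orthogonalGroup_fin_two_iff [NoZeroDivisors R] {M : Matrix (Fin 2) (Fin 2) R} :
    M ∈ orthogonalGroup (Fin 2) R ↔
      ∃ a b : R, a ^ 2 + b ^ 2 = 1 ∧ (M = !![a, b; -b, a] ∨ M = !![a, b; b, -a]) := by
  constructor
  · intro hM
    have hdet : M.det = 1 ∨ M.det = -1 := by
      rw [← sq_eq_one_iff]
      simpa [sq] using congr_arg det ((mem_orthogonalGroup_iff (Fin 2) R).mp hM)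
    obtain ⟨a, b, c, d, rfl⟩ : ∃ a b c d, M = !![a, b; c, d] := ⟨_, _, _, _, eta_fin_two M⟩
    rcases hdet with hdet | hdet
    · obtain ⟨rfl, rfl, h⟩ := of_mem_specialOrthogonalGroup_fin_two_iff.mp ⟨hM, hdet⟩
      exact ⟨a, -c, h, .inl <| by rw [neg_neg]⟩
    · obtain ⟨rfl, rfl, h⟩ := of_mem_orthogonalGroup_and_det_eq_neg_one_iff.mp ⟨hM, hdet⟩
      exact ⟨-d, b, h, .inr <| by rw [neg_neg]⟩
  · rintro ⟨a, b, h, rfl | rfl⟩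
    · exact (of_mem_specialOrthogonalGroup_fin_two_iff.mpr ⟨rfl, (neg_neg b).symm, h⟩).1
    · exact (of_mem_orthogonalGroup_and_det_eq_neg_one_iff.mpr ⟨(neg_neg a).symm, rfl, h⟩).1

end OrthogonalGroup

theorem exists_eq_cos_and_eq_sin {a b : ℝ} (h : a ^ 2 + b ^ 2 = 1) :
    ∃ θ : ℝ, a = cos θ ∧ b = sin θ := by
  have hnorm : ‖(⟨a, b⟩ : ℂ)‖ = 1 := by
    rw [Complex.norm_eq_sqrt_sq_add_sq, h, sqrt_one]
  obtain ⟨θ, hθ⟩ := (Complex.norm_eq_one_iff _).mp hnorm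
  have hcos := congr_arg Complex.re hθ
  have hsin := congr_arg Complex.im hθ
  rw [Complex.exp_ofReal_mul_I_re] at hcos
  rw [Complex.exp_ofReal_mul_I_im] at hsin
  exact ⟨θ, hcos.symm, hsin.symm⟩

/-- The row-major vectorization of a matrix, turning `2 × 2` matrices into two-qubit amplitude
vectors. Unlike `Matrix.vec` it stacks rows, which is the order of `|00⟩, |01⟩, |10⟩, |11⟩`. -/
def rowVec {R : Type*} {m n : ℕ} (M : Matrix (Fin m) (Fin n) R) : Fin (m * n) → R :=
  vec Mᵀ ∘ finProdFinEquiv.symm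

theorem rowVec_fin_two {R : Type*} (a b c d : R) :
    rowVec !![a, b; c, d] = ![a, b, c, d] := by
  ext i
  fin_cases i <;> rfl

theorem kronecker_submatrix_mulVec_rowVec {R : Type*} [CommSemiring R] {l m n p : ℕ}
    (A : Matrix (Fin l) (Fin m) R) (B : Matrix (Fin p) (Fin n) R) (M : Matrix (Fin m) (Fin n) R) :
    (A ⊗ₖ B).submatrix finProdFinEquiv.symm finProdFinEquiv.symm *ᵥ rowVec M =
      rowVec (A * M * Bᵀ) := by
  calc
    _ = ((A ⊗ₖ B) *ᵥ vec Mᵀ) ∘ finProdFinEquiv.symm := by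
      simp [submatrix_mulVec_equiv, rowVec, Function.comp_assoc]
    _ = rowVec (A * M * Bᵀ) := by
      simp [kronecker_mulVec_vec, rowVec, Matrix.mul_assoc]

theorem kron_mulVec_rowVec (A B M : Matrix (Fin 2) (Fin 2) ℝ) :
    kron A B *ᵥ rowVec M = rowVec (A * M * Bᵀ) :=
  -- `finProdFinEquiv.symm i` is `(i / 2, i % 2)`, the index splitting used by `kron`.
  kronecker_submatrix_mulVec_rowVec A B M

theorem v3_eq_rowVec : v3 = rowVec ((1 / √2) • (1 : Matrix (Fin 2) (Fin 2) ℝ)) := by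
  simp [v3, one_fin_two, rowVec_fin_two]

theorem rowVec_rotation (a b : ℝ) :
    rowVec ((1 / √2) • !![a, b; -b, a]) = a • v3 + b • v4 := by
  simp [rowVec_fin_two, v3, v4, mul_comm]

theorem rowVec_reflection (a b : ℝ) :
    rowVec ((1 / √2) • !![a, b; b, -a]) = a • v1 + b • v2 := by
  simp [rowVec_fin_two, v1, v2, mul_comm]

theorem exists_kron_mulVec_v3_eq_iff {w : Fin 4 → ℝ} :
    (∃ U V : Matrix (Fin 2) (Fin 2) ℝ, Uᵀ * U = 1 ∧ Vᵀ * V = 1 ∧ kron U V *ᵥ v3 = w) ↔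
      ∃ Q ∈ orthogonalGroup (Fin 2) ℝ, rowVec ((1 / √2) • Q) = w := by
  simp only [v3_eq_rowVec, kron_mulVec_rowVec, Matrix.mul_smul, Matrix.smul_mul, Matrix.mul_one,
    ← mem_orthogonalGroup_iff']
  constructor
  · rintro ⟨U, V, hU, hV, hw⟩
    exact ⟨U * Vᵀ, mul_mem hU (transpose_mem_unitaryGroup_iff.mpr hV), hw⟩
  · rintro ⟨Q, hQ, hw⟩
    exact ⟨Q, 1, hQ, one_mem _, by simpa using hw⟩

theorem stmt_3_general (w : Fin 4 → ℝ) :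
    (∃ U V : Matrix (Fin 2) (Fin 2) ℝ, Uᵀ * U = 1 ∧ Vᵀ * V = 1 ∧
        (kron U V).mulVec v3 = w) ↔
      ∃ θ : ℝ, w = Real.cos θ • v3 + Real.sin θ • v4 ∨
               w = Real.cos θ • v1 + Real.sin θ • v2 := by
  rw [exists_kron_mulVec_v3_eq_iff]
  simp only [mem_orthogonalGroup_fin_two_iff]
  constructor
  · rintro ⟨Q, ⟨a, b, hab, hQ⟩, rfl⟩
    obtain ⟨θ, rfl, rfl⟩ := exists_eq_cos_and_eq_sin hab
    rcases hQ with rfl | rfl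
    · exact ⟨θ, .inl <| rowVec_rotation _ _⟩
    · exact ⟨θ, .inr <| rowVec_reflection _ _⟩
  · rintro ⟨θ, rfl | rfl⟩
    · exact ⟨_, ⟨_, _, cos_sq_add_sin_sq θ, .inl rfl⟩, rowVec_rotation _ _⟩
    · exact ⟨_, ⟨_, _, cos_sq_add_sin_sq θ, .inr rfl⟩, rowVec_reflection _ _⟩

theorem stmt_3 (w : Fin 4 → ℝ)
    (hw : w 0 ^ 2 + w 1 ^ 2 + w 2 ^ 2 + w 3 ^ 2 = 1) :
    (∃ U V : Matrix (Fin 2) (Fin 2) ℝ, Uᵀ * U = 1 ∧ Vᵀ * V = 1 ∧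
        (kron U V).mulVec v3 = w) ↔
      ∃ θ : ℝ, w = Real.cos θ • v3 + Real.sin θ • v4 ∨
               w = Real.cos θ • v1 + Real.sin θ • v2 :=
  stmt_3_general w
end

section
/- A unit vector w = (w₁,w₂,w₃,w₄) ∈ ℝ⁴ is a product (unentangled) state, i.e. there exist vectors a = (a₁,a₂) and b = (b₁,b₂) in ℝ² with w₁ = a₁b₁, w₂ = a₁b₂, w₃ = a₂b₁, w₄ = a₂b₂, if and only if w₁w₄ = w₂w₃. Equivalently, in Bell coordinates, the product states are exactly those with x₁² + x₂² = 1/2 = x₃² + x₄², i.e. the points of the torus Σ_{π/4}. -/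
open Real

/-!
The amplitude matrix `W` of a product state has determinant zero. Conversely, let `w₁ w₄ = w₂ w₃`;
if `w₁ = 0`, then a row or a column of `W` vanishes, and otherwise the divisor `w₁` of `w₂ w₃`
splits as `a₁ b₁` with `a₁ ∣ w₂` and `b₁ ∣ w₃`, and the cofactors are `b₂` and `a₂`. In Bell
coordinates, `x₁² + x₂²` and `x₃² + x₄²` are `‖w‖² / 2 - det W` and `‖w‖² / 2 + det W`, so they
both equal `‖w‖² / 2` exactly when the determinant vanishes.
-/

section FourNumbers

variable {M : Type*} [CommMonoidWithZero M] [IsCancelMulZero M] [DecompositionMonoid M]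

theorem exists_factorization_of_mul_eq_mul {p q r s : M} (h : p * s = q * r) :
    ∃ a₁ a₂ b₁ b₂ : M, p = a₁ * b₁ ∧ q = a₁ * b₂ ∧ r = a₂ * b₁ ∧ s = a₂ * b₂ := by
  obtain rfl | hp := eq_or_ne p 0
  · have hqr : q * r = 0 := by rw [← h, zero_mul]
    obtain rfl | rfl := mul_eq_zero.mp hqr
    · exact ⟨0, 1, r, s, by simp⟩
    · exact ⟨q, s, 0, 1, by simp⟩
  · obtain ⟨a₁, b₁, ⟨b₂, rfl⟩, ⟨a₂, rfl⟩, rfl⟩ := exists_dvd_and_dvd_of_dvd_mul (Dvd.intro s h)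
    have hs : s = a₂ * b₂ := mul_left_cancel₀ hp <| by
      rw [h, mul_mul_mul_comm, mul_comm b₂]
    exact ⟨a₁, a₂, b₁, b₂, rfl, rfl, mul_comm _ _, hs⟩

theorem exists_factorization_iff_mul_eq_mul {p q r s : M} :
    (∃ a₁ a₂ b₁ b₂ : M, p = a₁ * b₁ ∧ q = a₁ * b₂ ∧ r = a₂ * b₁ ∧ s = a₂ * b₂) ↔
      p * s = q * r := by
  refine ⟨?_, exists_factorization_of_mul_eq_mul⟩
  rintro ⟨a₁, a₂, b₁, b₂, rfl, rfl, rfl, rfl⟩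
  rw [mul_mul_mul_comm, mul_comm b₁, mul_mul_mul_comm]

end FourNumbers

section BellCoordinates

variable (a b c d : ℝ)

theorem bell_sq_add_sq_eq_sub_det :
    ((a - d) / √2) ^ 2 + ((b + c) / √2) ^ 2 =
      (a ^ 2 + b ^ 2 + c ^ 2 + d ^ 2) / 2 - (a * d - b * c) := by
  rw [div_pow, div_pow, sq_sqrt zero_le_two]
  ring

theorem bell_sq_add_sq_eq_add_det :
    ((a + d) / √2) ^ 2 + ((b - c) / √2) ^ 2 =
      (a ^ 2 + b ^ 2 + c ^ 2 + d ^ 2) / 2 + (a * d - b * c) := by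
  rw [div_pow, div_pow, sq_sqrt zero_le_two]
  ring

theorem mul_eq_mul_iff_bell_sq_add_sq :
    a * d = b * c ↔
      ((a - d) / √2) ^ 2 + ((b + c) / √2) ^ 2 = (a ^ 2 + b ^ 2 + c ^ 2 + d ^ 2) / 2 ∧
      ((a + d) / √2) ^ 2 + ((b - c) / √2) ^ 2 = (a ^ 2 + b ^ 2 + c ^ 2 + d ^ 2) / 2 := by
  rw [bell_sq_add_sq_eq_sub_det, bell_sq_add_sq_eq_add_det, sub_eq_self, add_eq_left, and_self,
    sub_eq_zero]

end BellCoordinates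

theorem stmt_5 (w : Fin 4 → ℝ)
    (hw : w 0 ^ 2 + w 1 ^ 2 + w 2 ^ 2 + w 3 ^ 2 = 1) :
    ((∃ a₁ a₂ b₁ b₂ : ℝ,
        w 0 = a₁ * b₁ ∧ w 1 = a₁ * b₂ ∧ w 2 = a₂ * b₁ ∧ w 3 = a₂ * b₂) ↔
      w 0 * w 3 = w 1 * w 2) ∧
    ((∃ a₁ a₂ b₁ b₂ : ℝ,
        w 0 = a₁ * b₁ ∧ w 1 = a₁ * b₂ ∧ w 2 = a₂ * b₁ ∧ w 3 = a₂ * b₂) ↔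
      ((w 0 - w 3) / Real.sqrt 2) ^ 2 + ((w 1 + w 2) / Real.sqrt 2) ^ 2 = 1 / 2 ∧
      ((w 0 + w 3) / Real.sqrt 2) ^ 2 + ((w 1 - w 2) / Real.sqrt 2) ^ 2 = 1 / 2) := by
  have product_iff_bell := exists_factorization_iff_mul_eq_mul.trans
    (mul_eq_mul_iff_bell_sq_add_sq (w 0) (w 1) (w 2) (w 3))
  rw [hw] at product_iff_bell
  exact ⟨exists_factorization_iff_mul_eq_mul, product_iff_bell⟩
end

section
/- Let w = (w₁,w₂,w₃,w₄) be a unit vector in ℝ⁴. Then |w₁w₄ − w₂w₃| = 1/2 if and only if there exists θ ∈ ℝ such that w = cos θ · v₃ + sin θ · v₄ or w = cos θ · v₁ + sin θ · v₂. (The maximally entangled two-qubit states with real amplitudes form exactly the union of the two disjoint circles E(v₃,v₄) and E(v₁,v₂) in the three-sphere.) -/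
open Matrix Real

/-!
Read `w` as the 2 × 2 matrix with rows `(w₁, w₂)` and `(w₃, w₄)`, where `wᵢ` is `w (i - 1)` in the
code. If `ε = ±1`, then
`(w₄ - ε w₁)² + (w₃ + ε w₂)² = ‖w‖² - 2 ε det w`, so a unit vector with `det w = ε / 2` makes both
squares vanish. The matrix is then a rotation (`ε = 1`) or a reflection (`ε = -1`) scaled by `1/√2`,
and its first row is `(cos θ, sin θ) / √2` for some `θ`.
-/

theorem sq_add_sq_eq_sq_iff_exists_cos_sin {x y r : ℝ} :
    x ^ 2 + y ^ 2 = r ^ 2 ↔ ∃ θ : ℝ, x = r * cos θ ∧ y = r * sin θ := by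
  have mem_sphere_iff : (⟨x, y⟩ : ℂ) ∈ Metric.sphere 0 |r| ↔ x ^ 2 + y ^ 2 = r ^ 2 := by
    rw [mem_sphere_zero_iff_norm, ← sq_eq_sq₀ (norm_nonneg _) (abs_nonneg r), sq_abs,
      Complex.sq_norm, Complex.normSq_mk, ← sq, ← sq]
  rw [← mem_sphere_iff, ← range_circleMap, Set.mem_range]
  simp [circleMap, Complex.ext_iff, Complex.exp_ofReal_mul_I_re, Complex.exp_ofReal_mul_I_im,
    eq_comm]

theorem two_mul_det_eq_sum_sq_iff {R : Type*} [CommRing R] [LinearOrder R] [IsStrictOrderedRing R]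
    {ε : R} (hε : ε ^ 2 = 1) {a b c d : R} :
    2 * (ε * (a * d - b * c)) = a ^ 2 + b ^ 2 + c ^ 2 + d ^ 2 ↔ d = ε * a ∧ c = -(ε * b) := by
  have sum_sq_sub_det : (d - ε * a) ^ 2 + (c + ε * b) ^ 2 =
      a ^ 2 + b ^ 2 + c ^ 2 + d ^ 2 - 2 * (ε * (a * d - b * c)) := by
    linear_combination (a ^ 2 + b ^ 2) * hε
  rw [eq_comm, ← sub_eq_zero, ← sum_sq_sub_det,
    add_eq_zero_iff_of_nonneg (sq_nonneg _) (sq_nonneg _), sq_eq_zero_iff, sq_eq_zero_iff,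
    sub_eq_zero, add_eq_zero_iff_eq_neg]

/-- The circle `E(u, v)` of all `cos θ • u + sin θ • v`. It is a great circle of the unit sphere
when `u` and `v` are orthonormal; the definition itself makes sense for arbitrary `u` and `v`. -/
def trigCircle {M : Type*} [AddCommGroup M] [Module ℝ M] (u v : M) : Set M :=
  {w | ∃ θ : ℝ, w = cos θ • u + sin θ • v}

theorem mem_trigCircle_iff_coords {r ε : ℝ} {w : Fin 4 → ℝ} :
    w ∈ trigCircle ![r, 0, 0, ε * r] ![0, r, -(ε * r), 0] ↔
      (w 3 = ε * w 0 ∧ w 2 = -(ε * w 1)) ∧ w 0 ^ 2 + w 1 ^ 2 = r ^ 2 := by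
  rw [sq_add_sq_eq_sq_iff_exists_cos_sin, ← exists_and_left]
  refine exists_congr fun θ ↦ ?_
  have coords : cos θ • ![r, 0, 0, ε * r] + sin θ • ![0, r, -(ε * r), 0] =
      ![r * cos θ, r * sin θ, -(ε * (r * sin θ)), ε * (r * cos θ)] := by
    ext i
    fin_cases i <;> simp <;> ring
  rw [coords]
  constructor
  · rintro rfl
    exact ⟨⟨rfl, rfl⟩, rfl, rfl⟩
  · rintro ⟨⟨h₃, h₂⟩, h₀, h₁⟩
    ext i
    fin_cases i <;> simp [h₀, h₁, h₂, h₃]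

theorem det_eq_mul_sq_iff_mem_trigCircle {r ε : ℝ} {w : Fin 4 → ℝ} (hε : ε ^ 2 = 1)
    (hw : w 0 ^ 2 + w 1 ^ 2 + w 2 ^ 2 + w 3 ^ 2 = 2 * r ^ 2) :
    w 0 * w 3 - w 1 * w 2 = ε * r ^ 2 ↔
      w ∈ trigCircle ![r, 0, 0, ε * r] ![0, r, -(ε * r), 0] := by
  have det_iff : w 0 * w 3 - w 1 * w 2 = ε * r ^ 2 ↔ w 3 = ε * w 0 ∧ w 2 = -(ε * w 1) := by
    rw [← two_mul_det_eq_sum_sq_iff hε, hw]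
    constructor <;> intro h
    · linear_combination 2 * ε * h + 2 * r ^ 2 * hε
    · linear_combination ε / 2 * h - (w 0 * w 3 - w 1 * w 2) * hε
  rw [det_iff, mem_trigCircle_iff_coords, iff_self_and]
  rintro ⟨h₃, h₂⟩
  rw [h₂, h₃] at hw
  linear_combination hw / 2 - (w 0 ^ 2 + w 1 ^ 2) / 2 * hε

theorem det_eq_half_iff_mem_trigCircle {w : Fin 4 → ℝ}
    (hw : w 0 ^ 2 + w 1 ^ 2 + w 2 ^ 2 + w 3 ^ 2 = 1) :
    w 0 * w 3 - w 1 * w 2 = 1 / 2 ↔ w ∈ trigCircle v3 v4 := by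
  simpa [v3, v4] using det_eq_mul_sq_iff_mem_trigCircle (w := w) (r := 1 / √2) (ε := 1)
    (by norm_num) (by simpa using hw)

theorem det_eq_neg_half_iff_mem_trigCircle {w : Fin 4 → ℝ}
    (hw : w 0 ^ 2 + w 1 ^ 2 + w 2 ^ 2 + w 3 ^ 2 = 1) :
    w 0 * w 3 - w 1 * w 2 = -(1 / 2) ↔ w ∈ trigCircle v1 v2 := by
  simpa [v1, v2] using det_eq_mul_sq_iff_mem_trigCircle (w := w) (r := 1 / √2) (ε := -1)
    (by norm_num) (by simpa using hw)

theorem stmt_7 (w : Fin 4 → ℝ)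
    (hw : w 0 ^ 2 + w 1 ^ 2 + w 2 ^ 2 + w 3 ^ 2 = 1) :
    |w 0 * w 3 - w 1 * w 2| = 1 / 2 ↔
      ∃ θ : ℝ, w = Real.cos θ • v3 + Real.sin θ • v4 ∨
               w = Real.cos θ • v1 + Real.sin θ • v2 := by
  rw [abs_eq one_half_pos.le, det_eq_half_iff_mem_trigCircle hw,
    det_eq_neg_half_iff_mem_trigCircle hw, exists_or]
  rfl
end

section
/- For all real numbers d₁ and d with 0 ≤ d₁ ≤ d ≤ π/2, there exists a unit vector x = (x₁,x₂,x₃,x₄) ∈ ℝ⁴ satisfying simultaneously x₂² + x₃² = sin² d, x₁² + x₄² = cos² d, x₁² + x₂² = sin² d₁ and x₃² + x₄² = cos² d₁; indeed x = (0, sin d₁, √(sin² d − sin² d₁), cos d) is such a solution. (The torus obtained by applying the CZ gate to the torus Σ_d intersects every torus Σ_{d₁}, which is the key geometric fact behind the one-CZ connectivity theorem.) -/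
open Real

theorem sin_sq_le_sin_sq_of_abs_le {a b : ℝ} (hab : |a| ≤ |b|) (hb : |b| ≤ π / 2) :
    sin a ^ 2 ≤ sin b ^ 2 := by
  have hπ : π / 2 ≤ π := half_le_self pi_nonneg
  rw [sq_le_sq, abs_sin_eq_sin_abs_of_abs_le_pi (hab.trans (hb.trans hπ)),
    abs_sin_eq_sin_abs_of_abs_le_pi (hb.trans hπ)]
  exact sin_le_sin_of_le_of_le_pi_div_two (by linarith [pi_pos, abs_nonneg a]) hb hab

theorem stmt_14_general (d₁ d : ℝ) (h : sin d₁ ^ 2 ≤ sin d ^ 2) (x : Fin 4 → ℝ)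
    (hx : x = ![0, sin d₁, √(sin d ^ 2 - sin d₁ ^ 2), cos d]) :
    x 0 ^ 2 + x 1 ^ 2 + x 2 ^ 2 + x 3 ^ 2 = 1 ∧
    x 1 ^ 2 + x 2 ^ 2 = sin d ^ 2 ∧
    x 0 ^ 2 + x 3 ^ 2 = cos d ^ 2 ∧
    x 0 ^ 2 + x 1 ^ 2 = sin d₁ ^ 2 ∧
    x 2 ^ 2 + x 3 ^ 2 = cos d₁ ^ 2 := by
  have hx₀ : x 0 ^ 2 = 0 := by simp [hx]
  have hx₁ : x 1 ^ 2 = sin d₁ ^ 2 := by simp [hx]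
  have hx₂ : x 2 ^ 2 = sin d ^ 2 - sin d₁ ^ 2 := by simp [hx, sq_sqrt (sub_nonneg.mpr h)]
  have hx₃ : x 3 ^ 2 = cos d ^ 2 := by simp [hx]
  have h_circle := sin_sq_add_cos_sq d
  have h_circle₁ := sin_sq_add_cos_sq d₁
  refine ⟨?_, ?_, ?_, ?_, ?_⟩ <;> linarith

theorem stmt_14 (d₁ d : ℝ) (h0 : 0 ≤ d₁) (h1 : d₁ ≤ d) (h2 : d ≤ Real.pi / 2)
    (x : Fin 4 → ℝ)
    (hx : x = ![0, Real.sin d₁,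
      Real.sqrt (Real.sin d ^ 2 - Real.sin d₁ ^ 2), Real.cos d]) :
    x 0 ^ 2 + x 1 ^ 2 + x 2 ^ 2 + x 3 ^ 2 = 1 ∧
    x 1 ^ 2 + x 2 ^ 2 = Real.sin d ^ 2 ∧
    x 0 ^ 2 + x 3 ^ 2 = Real.cos d ^ 2 ∧
    x 0 ^ 2 + x 1 ^ 2 = Real.sin d₁ ^ 2 ∧
    x 2 ^ 2 + x 3 ^ 2 = Real.cos d₁ ^ 2 :=
  stmt_14_general d₁ d (sin_sq_le_sin_sq_of_abs_le (abs_le_abs_of_nonneg h0 h1)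
    ((abs_of_nonneg (h0.trans h1)).trans_le h2)) x hx
end

section
/- For every pair of unit vectors w and w' in ℝ⁴ there exist angles θ₀, θ₁, θ₂, θ₃ ∈ ℝ such that (R_y(θ₃) ⊗ R_y(θ₂)) · CZ · (R_y(θ₁) ⊗ R_y(θ₀)) w = w'. (Any two two-qubit states with real amplitudes can be connected by a circuit consisting of single-qubit R_y gates and exactly one controlled-Z gate.) -/
/-!
In Bell coordinates `z₁ = (w 0 - w 3) + i (w 1 + w 2)` and `z₂ = (w 0 + w 3) + i (w 2 - w 1)`, the
gate `R_y(θ₁) ⊗ R_y(θ₀)` rotates `z₁` by the angle `(θ₁ + θ₀) / 2` and `z₂` by `(θ₁ - θ₀) / 2`.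
These two angles are arbitrary, so local rotations connect any two vectors with the same `|z₁|` and
the same `|z₂|`. The gate `CZ` exchanges the real parts of `z₁` and `z₂`. It therefore remains to
find a vector with the `|z₁|` and `|z₂|` of the source such that `CZ` takes it to one with those of
the target. The squares of its four real coordinates form a nonnegative `2 × 2` matrix with
prescribed row sums (the source) and column sums (the target), and such a matrix exists because the
source and the target have the same norm.
-/

open Matrix Real

/-- The controlled-Z gate `CZ = diag(1,1,1,-1)`. -/
def CZ : Matrix (Fin 4) (Fin 4) ℝ :=
  !![1, 0, 0, 0; 0, 1, 0, 0; 0, 0, 1, 0; 0, 0, 0, -1]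

open Complex (I normSq)

-- The witness is the northwest corner rule for the transportation problem.
lemma exists_nonneg_add_eq_of_add_eq_add {G : Type*} [AddCommGroup G] [LinearOrder G]
    [IsOrderedAddMonoid G] {r₁ r₂ c₁ c₂ : G} (hr₁ : 0 ≤ r₁) (hr₂ : 0 ≤ r₂) (hc₁ : 0 ≤ c₁)
    (hc₂ : 0 ≤ c₂) (h : r₁ + r₂ = c₁ + c₂) :
    ∃ a b c d : G, (0 ≤ a ∧ 0 ≤ b ∧ 0 ≤ c ∧ 0 ≤ d) ∧
      a + b = r₁ ∧ c + d = r₂ ∧ a + c = c₁ ∧ b + d = c₂ := by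
  rcases le_total r₁ c₁ with hle | hle
  · refine ⟨r₁, 0, c₁ - r₁, c₂, ⟨hr₁, le_rfl, sub_nonneg.2 hle, hc₂⟩, add_zero _, ?_,
      add_sub_cancel _ _, zero_add _⟩
    rw [sub_add_eq_add_sub, ← h, add_sub_cancel_left]
  · refine ⟨c₁, r₁ - c₁, 0, r₂, ⟨hc₁, sub_nonneg.2 hle, le_rfl, hr₂⟩, add_sub_cancel _ _,
      zero_add _, add_zero _, ?_⟩
    rw [sub_add_eq_add_sub, h, add_sub_cancel_left]

lemma exists_normSq_eq_and_normSq_swap_re_eq {r₁ r₂ s₁ s₂ : ℝ} (hr₁ : 0 ≤ r₁) (hr₂ : 0 ≤ r₂)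
    (hs₁ : 0 ≤ s₁) (hs₂ : 0 ≤ s₂) (h : r₁ + r₂ = s₁ + s₂) :
    ∃ z₁ z₂ : ℂ, (normSq z₁ = r₁ ∧ normSq z₂ = r₂) ∧
      normSq ⟨z₂.re, z₁.im⟩ = s₁ ∧ normSq ⟨z₁.re, z₂.im⟩ = s₂ := by
  obtain ⟨a, b, c, d, ⟨ha, hb, hc, hd⟩, hab, hcd, hac, hbd⟩ :=
    exists_nonneg_add_eq_of_add_eq_add hr₁ hr₂ hs₁ hs₂ h
  refine ⟨⟨√b, √a⟩, ⟨√c, √d⟩, ?_⟩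
  simp only [Complex.normSq_mk, mul_self_sqrt ha, mul_self_sqrt hb, mul_self_sqrt hc,
    mul_self_sqrt hd]
  exact ⟨⟨by rw [add_comm, hab], hcd⟩, by rw [add_comm, hac], hbd⟩

lemma exists_exp_mul_I_mul_eq_of_norm_eq {z w : ℂ} (h : ‖z‖ = ‖w‖) :
    ∃ α : ℝ, Complex.exp (α * I) * z = w := by
  refine ⟨w.arg - z.arg, ?_⟩
  nth_rw 2 [← Complex.norm_mul_exp_arg_mul_I z]
  rw [mul_left_comm, ← Complex.exp_add, h, Complex.ofReal_sub, ← add_mul, sub_add_cancel,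
    Complex.norm_mul_exp_arg_mul_I]

lemma kron_eq (A B : Matrix (Fin 2) (Fin 2) ℝ) :
    kron A B =
      !![A 0 0 * B 0 0, A 0 0 * B 0 1, A 0 1 * B 0 0, A 0 1 * B 0 1;
        A 0 0 * B 1 0, A 0 0 * B 1 1, A 0 1 * B 1 0, A 0 1 * B 1 1;
        A 1 0 * B 0 0, A 1 0 * B 0 1, A 1 1 * B 0 0, A 1 1 * B 0 1;
        A 1 0 * B 1 0, A 1 0 * B 1 1, A 1 1 * B 1 0, A 1 1 * B 1 1] := by
  ext i j
  fin_cases i <;> fin_cases j <;> rfl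

attribute [local ext] Complex.ext

/-- The unnormalized coordinates of a real two-qubit state in the Bell basis, grouped into complex
numbers so that local `R_y` rotations act diagonally: the first one holds the amplitudes of
`|00⟩ - |11⟩` and `|01⟩ + |10⟩`, the second one those of `|00⟩ + |11⟩` and `|10⟩ - |01⟩`. -/
@[simps]
noncomputable def bellCoords : (Fin 4 → ℝ) ≃ₗ[ℝ] ℂ × ℂ where
  toFun w := (⟨w 0 - w 3, w 1 + w 2⟩, ⟨w 0 + w 3, w 2 - w 1⟩)
  invFun z := ![(z.2.re + z.1.re) / 2, (z.1.im - z.2.im) / 2, (z.1.im + z.2.im) / 2,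
    (z.2.re - z.1.re) / 2]
  map_add' u v := by
    ext <;> simp only [Pi.add_apply, Prod.fst_add, Prod.snd_add, Complex.add_re, Complex.add_im] <;>
      ring
  map_smul' a u := by
    ext <;> simp only [Pi.smul_apply, smul_eq_mul, RingHom.id_apply, Prod.smul_fst, Prod.smul_snd,
      Complex.smul_re, Complex.smul_im] <;> ring
  left_inv w := by ext i; fin_cases i <;> dsimp <;> ring
  right_inv z := by ext <;> simp only [cons_val] <;> ring

namespace bellCoords

lemma normSq_fst_add_normSq_snd (w : Fin 4 → ℝ) :
    normSq (bellCoords w).1 + normSq (bellCoords w).2 =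
      2 * (w 0 ^ 2 + w 1 ^ 2 + w 2 ^ 2 + w 3 ^ 2) := by
  simp only [bellCoords_apply, Complex.normSq_mk]
  ring

lemma CZ_mulVec (w : Fin 4 → ℝ) :
    bellCoords (CZ *ᵥ w) =
      (⟨(bellCoords w).2.re, (bellCoords w).1.im⟩, ⟨(bellCoords w).1.re, (bellCoords w).2.im⟩) := by
  simp [CZ, dotProduct, Fin.sum_univ_four, sub_eq_add_neg]

lemma kron_Ry_mulVec (θ₁ θ₀ : ℝ) (w : Fin 4 → ℝ) :
    bellCoords (kron (Ry θ₁) (Ry θ₀) *ᵥ w) =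
      (Complex.exp (↑((θ₁ + θ₀) / 2) * I) * (bellCoords w).1,
        Complex.exp (↑((θ₁ - θ₀) / 2) * I) * (bellCoords w).2) := by
  ext <;>
  · simp only [bellCoords_apply, kron_eq, Ry, mulVec, dotProduct, Fin.sum_univ_four, of_apply,
      cons_val, Complex.mul_re, Complex.mul_im, Complex.exp_ofReal_mul_I_re,
      Complex.exp_ofReal_mul_I_im, add_div, sub_div, cos_add, sin_add, cos_sub, sin_sub]
    ring

end bellCoords

lemma exists_kron_Ry_mulVec_eq {u v : Fin 4 → ℝ}
    (h₁ : normSq (bellCoords u).1 = normSq (bellCoords v).1)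
    (h₂ : normSq (bellCoords u).2 = normSq (bellCoords v).2) :
    ∃ θ₀ θ₁ : ℝ, kron (Ry θ₁) (Ry θ₀) *ᵥ u = v := by
  obtain ⟨α, hα⟩ := exists_exp_mul_I_mul_eq_of_norm_eq
    (show ‖(bellCoords u).1‖ = ‖(bellCoords v).1‖ by rw [Complex.norm_def, h₁, Complex.norm_def])
  obtain ⟨β, hβ⟩ := exists_exp_mul_I_mul_eq_of_norm_eq
    (show ‖(bellCoords u).2‖ = ‖(bellCoords v).2‖ by rw [Complex.norm_def, h₂, Complex.norm_def])
  refine ⟨α - β, α + β, bellCoords.injective ?_⟩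
  have hsum : (α + β + (α - β)) / 2 = α := by ring
  have hdiff : (α + β - (α - β)) / 2 = β := by ring
  rw [bellCoords.kron_Ry_mulVec, hsum, hdiff, hα, hβ]

theorem stmt_15_general (w w' : Fin 4 → ℝ)
    (h : w 0 ^ 2 + w 1 ^ 2 + w 2 ^ 2 + w 3 ^ 2 = w' 0 ^ 2 + w' 1 ^ 2 + w' 2 ^ 2 + w' 3 ^ 2) :
    ∃ θ₀ θ₁ θ₂ θ₃ : ℝ,
      kron (Ry θ₃) (Ry θ₂) *ᵥ (CZ *ᵥ (kron (Ry θ₁) (Ry θ₀) *ᵥ w)) = w' := by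
  obtain ⟨z₁, z₂, ⟨hz₁, hz₂⟩, hz₁', hz₂'⟩ := exists_normSq_eq_and_normSq_swap_re_eq
    (Complex.normSq_nonneg (bellCoords w).1) (Complex.normSq_nonneg (bellCoords w).2)
    (Complex.normSq_nonneg (bellCoords w').1) (Complex.normSq_nonneg (bellCoords w').2)
    (by simp only [bellCoords.normSq_fst_add_normSq_snd, h])
  obtain ⟨u, hu⟩ := bellCoords.surjective (z₁, z₂)
  obtain ⟨θ₀, θ₁, hwu⟩ : ∃ θ₀ θ₁ : ℝ, kron (Ry θ₁) (Ry θ₀) *ᵥ w = u :=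
    exists_kron_Ry_mulVec_eq (by rw [hu, hz₁]) (by rw [hu, hz₂])
  obtain ⟨θ₂, θ₃, huw'⟩ : ∃ θ₂ θ₃ : ℝ, kron (Ry θ₃) (Ry θ₂) *ᵥ (CZ *ᵥ u) = w' :=
    exists_kron_Ry_mulVec_eq (by rw [bellCoords.CZ_mulVec, hu, hz₁'])
      (by rw [bellCoords.CZ_mulVec, hu, hz₂'])
  exact ⟨θ₀, θ₁, θ₂, θ₃, by rw [hwu, huw']⟩

theorem stmt_15 (w w' : Fin 4 → ℝ)
    (hw : w 0 ^ 2 + w 1 ^ 2 + w 2 ^ 2 + w 3 ^ 2 = 1)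
    (hw' : w' 0 ^ 2 + w' 1 ^ 2 + w' 2 ^ 2 + w' 3 ^ 2 = 1) :
    ∃ θ₀ θ₁ θ₂ θ₃ : ℝ,
      (kron (Ry θ₃) (Ry θ₂)).mulVec
        (CZ.mulVec ((kron (Ry θ₁) (Ry θ₀)).mulVec w)) = w' :=
  stmt_15_general w w' (hw.trans hw'.symm)
end

section
/- For every unit vector w = (w₁,w₂,w₃,w₄) ∈ ℝ⁴ there exist angles θ₀, θ₁, θ₂ ∈ ℝ such that (I₂ ⊗ R_y(θ₂)) · CZ · (R_y(θ₁) ⊗ R_y(θ₀)) e₀₀ = w, where e₀₀ = (1,0,0,0) and I₂ is the 2×2 identity matrix. (Every two-qubit state with real amplitudes can be prepared from |00⟩ by a circuit with three R_y gates and a single controlled-Z gate.) -/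
open Matrix Real

/-!
Condition on the first qubit: a two-qubit state is `|0⟩ ⊗ x + |1⟩ ⊗ y`, and `CZ` acts as the
reflection `Z` on `y` alone. The first layer of rotations puts both branches in the direction at
angle `θ₀ / 2`, with weights `cos (θ₁ / 2)` and `sin (θ₁ / 2)`; `CZ` reflects the second
direction to `-θ₀ / 2`, and the last rotation turns both by `θ₂ / 2`. The final directions
`(θ₂ ± θ₀) / 2` can be prescribed independently, so they and the weights are read off from the
polar coordinates of the two branches of the target state.
-/

/-- The real two-qubit vector `|0⟩ ⊗ x + |1⟩ ⊗ y`, split according to the value of the first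
qubit. -/
def branches (x y : Fin 2 → ℝ) : Fin 4 → ℝ :=
  ![x 0, x 1, y 0, y 1]

/-- The real single-qubit state `cos φ |0⟩ + sin φ |1⟩`. Here `φ` is the angle in the plane, which
is half of the Bloch-sphere angle used by `Ry`. -/
noncomputable def realQubit (φ : ℝ) : Fin 2 → ℝ :=
  ![cos φ, sin φ]

/-- The Pauli gate `Z`, which `CZ` applies to the second qubit when the first one is `|1⟩`. -/
def pauliZ : Matrix (Fin 2) (Fin 2) ℝ :=
  !![1, 0; 0, -1]

lemma branches_eta (w : Fin 4 → ℝ) : branches ![w 0, w 1] ![w 2, w 3] = w := by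
  ext i
  fin_cases i <;> rfl

lemma kron_mulVec_branches (A B : Matrix (Fin 2) (Fin 2) ℝ) (x y : Fin 2 → ℝ) :
    kron A B *ᵥ branches x y =
      branches (B *ᵥ (A 0 0 • x + A 0 1 • y)) (B *ᵥ (A 1 0 • x + A 1 1 • y)) := by
  ext i
  fin_cases i <;>
    simp [kron, branches, mulVec, dotProduct, Fin.sum_univ_four] <;> ring

lemma kron_one_mulVec_branches (B : Matrix (Fin 2) (Fin 2) ℝ) (x y : Fin 2 → ℝ) :
    kron 1 B *ᵥ branches x y = branches (B *ᵥ x) (B *ᵥ y) := by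
  simp [kron_mulVec_branches]

lemma CZ_mulVec_branches (x y : Fin 2 → ℝ) :
    CZ *ᵥ branches x y = branches x (pauliZ *ᵥ y) := by
  ext i
  fin_cases i <;> simp [CZ, branches, pauliZ, mulVec, dotProduct, Fin.sum_univ_four]

lemma realQubit_zero : realQubit 0 = ![1, 0] := by
  simp [realQubit]

lemma pauliZ_mulVec_realQubit (φ : ℝ) : pauliZ *ᵥ realQubit φ = realQubit (-φ) := by
  ext i
  fin_cases i <;> simp [pauliZ, realQubit]

lemma Ry_mulVec_realQubit (θ φ : ℝ) : Ry θ *ᵥ realQubit φ = realQubit (θ / 2 + φ) := by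
  ext i
  fin_cases i <;> simp [Ry, realQubit, cos_add, sin_add] <;> ring

lemma exists_eq_sqrt_smul_realQubit (x : Fin 2 → ℝ) :
    ∃ φ, x = √(x 0 ^ 2 + x 1 ^ 2) • realQubit φ := by
  let z : ℂ := ⟨x 0, x 1⟩
  have norm_z : ‖z‖ = √(x 0 ^ 2 + x 1 ^ 2) := Complex.norm_eq_sqrt_sq_add_sq z
  refine ⟨z.arg, ?_⟩
  rw [← norm_z]
  ext i
  fin_cases i
  · exact (Complex.norm_mul_cos_arg z).symm
  · exact (Complex.norm_mul_sin_arg z).symm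

lemma exists_eq_cos_and_eq_sin_s16 {r s : ℝ} (h : r ^ 2 + s ^ 2 = 1) : ∃ φ, r = cos φ ∧ s = sin φ := by
  obtain ⟨φ, hφ⟩ := exists_eq_sqrt_smul_realQubit ![r, s]
  refine ⟨φ, ?_⟩
  simpa [h, realQubit] using hφ

lemma rotations_mulVec_zero_zero (θ₀ θ₁ : ℝ) :
    kron (Ry θ₁) (Ry θ₀) *ᵥ ![1, 0, 0, 0] =
      branches (cos (θ₁ / 2) • realQubit (θ₀ / 2)) (sin (θ₁ / 2) • realQubit (θ₀ / 2)) := by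
  have zero_zero : ![1, 0, 0, 0] = branches (realQubit 0) 0 := by
    simp [branches, realQubit_zero]
  rw [zero_zero, kron_mulVec_branches]
  simp only [smul_zero, add_zero, mulVec_smul, Ry_mulVec_realQubit]
  simp [Ry]

lemma circuit_mulVec_zero_zero (θ₀ θ₁ θ₂ : ℝ) :
    kron 1 (Ry θ₂) *ᵥ (CZ *ᵥ (kron (Ry θ₁) (Ry θ₀) *ᵥ ![1, 0, 0, 0])) =
      branches (cos (θ₁ / 2) • realQubit ((θ₂ + θ₀) / 2))
        (sin (θ₁ / 2) • realQubit ((θ₂ - θ₀) / 2)) := by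
  simp only [rotations_mulVec_zero_zero, CZ_mulVec_branches, kron_one_mulVec_branches,
    mulVec_smul, pauliZ_mulVec_realQubit, Ry_mulVec_realQubit, add_div, sub_div,
    ← sub_eq_add_neg]

theorem stmt_16 (w : Fin 4 → ℝ)
    (hw : w 0 ^ 2 + w 1 ^ 2 + w 2 ^ 2 + w 3 ^ 2 = 1) :
    ∃ θ₀ θ₁ θ₂ : ℝ,
      (kron 1 (Ry θ₂)).mulVec
        (CZ.mulVec ((kron (Ry θ₁) (Ry θ₀)).mulVec ![1, 0, 0, 0])) = w := by
  obtain ⟨α, hα⟩ := exists_eq_sqrt_smul_realQubit ![w 0, w 1]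
  obtain ⟨β, hβ⟩ := exists_eq_sqrt_smul_realQubit ![w 2, w 3]
  have weights_sq_add_sq : √(w 0 ^ 2 + w 1 ^ 2) ^ 2 + √(w 2 ^ 2 + w 3 ^ 2) ^ 2 = 1 := by
    rw [sq_sqrt (by positivity), sq_sqrt (by positivity), ← add_assoc, hw]
  obtain ⟨γ, hcos, hsin⟩ := exists_eq_cos_and_eq_sin_s16 weights_sq_add_sq
  refine ⟨α - β, 2 * γ, α + β, ?_⟩
  have half_double : 2 * γ / 2 = γ := by ring
  have half_sum : (α + β + (α - β)) / 2 = α := by ring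
  have half_diff : (α + β - (α - β)) / 2 = β := by ring
  rw [circuit_mulVec_zero_zero, half_double, half_sum, half_diff, ← hcos, ← hsin]
  calc
    branches (√(w 0 ^ 2 + w 1 ^ 2) • realQubit α) (√(w 2 ^ 2 + w 3 ^ 2) • realQubit β)
    _ = branches ![w 0, w 1] ![w 2, w 3] := congrArg₂ branches hα.symm hβ.symm
    _ = w := branches_eta w
end
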